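/- (Pessimism.) Consider any δ ∈ (0,1) and suppose the constant c_b > 0 in the Q-EarlySettled-Advantage algorithm is sufficiently large. Then with probability at least 1 − δ, the iterates of the algorithm satisfy Q_h^{LCB,k}(s,a) ≤ Q_h^*(s,a) and V_h^{LCB,k}(s) ≤ V_h^*(s) simultaneously for all (s, a, k, h) ∈ S × A × [K] × [H]. -/

import Mathlib

open MeasureTheory Finset

/-- A finite-horizon MDP with horizon `H`, non-stationary transition kernels `P h s a ·`,
and deterministic rewards `r h s a ∈ [0,1]`. -/
structure MDP (S A : Type) [Fintype S] [Fintype A] where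
  H : ℕ
  P : ℕ → S → A → S → ℝ
  r : ℕ → S → A → ℝ
  H_pos : 1 ≤ H
  P_nonneg : ∀ h s a s', 0 ≤ P h s a s'
  P_sum_one : ∀ h s a, ∑ s', P h s a s' = 1
  r_nonneg : ∀ h s a, 0 ≤ r h s a
  r_le_one : ∀ h s a, r h s a ≤ 1

namespace MDP

variable {S A : Type} [Fintype S] [Fintype A] [Nonempty S] [Nonempty A]

/-- Optimal Q-function, defined by backward induction on the remaining number of steps
(`Qstar` below instantiates the fuel as `H + 1 - h`, so that values at step `H + 1`
vanish and the Bellman optimality equation holds for `1 ≤ h ≤ H`). -/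
noncomputable def QstarAux (M : MDP S A) : ℕ → ℕ → S → A → ℝ
  | 0, _, _, _ => 0
  | (fuel + 1), h, s, a =>
      M.r h s a + ∑ s' : S, M.P h s a s' *
        (Finset.univ.sup' Finset.univ_nonempty fun a' => QstarAux M fuel (h + 1) s' a')

/-- The optimal Q-function `Q_h^⋆`. -/
noncomputable def Qstar (M : MDP S A) (h : ℕ) (s : S) (a : A) : ℝ :=
  QstarAux M (M.H + 1 - h) h s a

/-- The optimal value function `V_h^⋆`. -/
noncomputable def Vstar (M : MDP S A) (h : ℕ) (s : S) : ℝ :=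
  Finset.univ.sup' Finset.univ_nonempty fun a => M.Qstar h s a

/-- Value function `V_h^π` of a deterministic policy `π`, by backward induction. -/
noncomputable def VpolAux (M : MDP S A) (π : ℕ → S → A) : ℕ → ℕ → S → ℝ
  | 0, _, _ => 0
  | (fuel + 1), h, s =>
      M.r h s (π h s) + ∑ s' : S, M.P h s (π h s) s' * VpolAux M π fuel (h + 1) s'

/-- The value function `V_h^π` of a deterministic policy `π`. -/
noncomputable def Vpol (M : MDP S A) (π : ℕ → S → A) (h : ℕ) (s : S) : ℝ :=
  VpolAux M π (M.H + 1 - h) h s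

/-- Conditional variance `Var_{h,s,a}(V) = P_{h,s,a}(V²) - (P_{h,s,a} V)²`. -/
noncomputable def varP (M : MDP S A) (h : ℕ) (s : S) (a : A) (V : S → ℝ) : ℝ :=
  (∑ s' : S, M.P h s a s' * (V s') ^ 2) - (∑ s' : S, M.P h s a s' * V s') ^ 2

end MDP

/-- The Q-learning rate `η_n = (H+1)/(H+n)`. -/
noncomputable def lr (H n : ℕ) : ℝ := (H + 1 : ℝ) / (H + n)

/-- `η_n^N`: equal to `η_n ∏_{i=n+1}^N (1 - η_i)` for `1 ≤ n ≤ N` (hence `η_n` for `N = n`),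
`0` for `N < n`, and `η_0^N = ∏_{i=1}^N (1 - η_i)` (which is `1` if `N = 0` and `0` otherwise,
since `1 - η_1 = 0`). -/
noncomputable def lrProd (H n N : ℕ) : ℝ :=
  if N < n then 0
  else (if n = 0 then 1 else lr H n) * ∏ i ∈ Finset.Icc (n + 1) N, (1 - lr H i)

/-- The log factor `log(SAT/δ)` with `T = KH`. -/
noncomputable def iota (S A : Type) [Fintype S] [Fintype A] (K H : ℕ) (δ : ℝ) : ℝ :=
  Real.log ((Fintype.card S : ℝ) * (Fintype.card A) * (K * H) / δ)

/-- The trajectory `(s_h^k, a_h^k)` is generated by online interaction with the MDP `M`: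
states and actions are adapted to the filtration `𝓕` (with time index `(k-1)H + h`
corresponding to step `h` of episode `k`), and conditionally on the history,
`s_{h+1}^k ∼ P_h(· | s_h^k, a_h^k)`. -/
def IsMDPTrajectory {S A : Type} [Fintype S] [Fintype A] [DecidableEq S]
    [MeasurableSpace S] [MeasurableSpace A]
    {Ω : Type} [m0 : MeasurableSpace Ω] (μ : Measure Ω)
    (M : MDP S A) (K : ℕ) (𝓕 : Filtration ℕ m0)
    (st : ℕ → ℕ → Ω → S) (ac : ℕ → ℕ → Ω → A) : Prop :=
  (∀ k ∈ Finset.Icc 1 K, ∀ h ∈ Finset.Icc 1 (M.H + 1),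
      Measurable[𝓕 ((k - 1) * M.H + h)] (st k h)) ∧
  (∀ k ∈ Finset.Icc 1 K, ∀ h ∈ Finset.Icc 1 M.H,
      Measurable[𝓕 ((k - 1) * M.H + h)] (ac k h)) ∧
  (∀ k ∈ Finset.Icc 1 K, ∀ h ∈ Finset.Icc 1 M.H, ∀ s' : S,
      μ[(fun ω => if st k (h + 1) ω = s' then (1 : ℝ) else 0) | 𝓕 ((k - 1) * M.H + h)]
        =ᵐ[μ] fun ω => M.P h (st k h ω) (ac k h ω) s')

/-- The **Q-EarlySettled-Advantage** algorithm (Algorithms 1–2 of the paper), run for `K`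
episodes on the MDP `M` with bonus constant `cb` and failure probability `δ`.
The fields record the trajectory `(s_h^k, a_h^k)`, the greedy policies `π^k`, the visit
counters, all Q/value estimates and auxiliary statistics, together with the initialization
and update equations defining the algorithm.  A quantity carrying episode index `k`
denotes its value at the *beginning* of episode `k` (`N k` is the counter at the *end*
of episode `k`, with `N 0 = 0`); `kvis n h s a` is the episode of the `n`-th visit of
`(s,a)` at step `h`. -/
structure QLAlg {S A : Type} [Fintype S] [Fintype A] [Nonempty S] [Nonempty A]
    [DecidableEq S] [DecidableEq A] (M : MDP S A) (K : ℕ) (cb δ : ℝ) where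
  /-- `s_h^k` : the state visited at step `h` of episode `k` -/
  st : ℕ → ℕ → S
  /-- `a_h^k` : the action taken at step `h` of episode `k` -/
  ac : ℕ → ℕ → A
  /-- `π^k` : the greedy policy executed during episode `k` -/
  pol : ℕ → ℕ → S → A
  /-- `N_h^k(s,a)` : number of visits of `(s,a)` at step `h` by the end of episode `k` -/
  N : ℕ → ℕ → S → A → ℕ
  /-- the combined Q-estimate `Q_h^k` -/
  Q : ℕ → ℕ → S → A → ℝ
  /-- the Hoeffding-bonus optimistic estimate `Q_h^{UCB,k}` -/
  QUCB : ℕ → ℕ → S → A → ℝ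
  /-- the pessimistic estimate `Q_h^{LCB,k}` -/
  QLCB : ℕ → ℕ → S → A → ℝ
  /-- the reference-advantage estimate `Q_h^{R,k}` -/
  QR : ℕ → ℕ → S → A → ℝ
  /-- `V_h^k` -/
  V : ℕ → ℕ → S → ℝ
  /-- `V_h^{LCB,k}` -/
  VLCB : ℕ → ℕ → S → ℝ
  /-- the reference value `V_h^{R,k}` -/
  VR : ℕ → ℕ → S → ℝ
  /-- the flag `u_ref^k` governing the final reference update -/
  uref : ℕ → ℕ → S → Prop
  /-- running mean `μ_h^{ref,k}` of the reference -/
  muRef : ℕ → ℕ → S → A → ℝ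
  /-- running second moment `σ_h^{ref,k}` of the reference -/
  sigRef : ℕ → ℕ → S → A → ℝ
  /-- running weighted mean `μ_h^{adv,k}` of the advantage -/
  muAdv : ℕ → ℕ → S → A → ℝ
  /-- running weighted second moment `σ_h^{adv,k}` of the advantage -/
  sigAdv : ℕ → ℕ → S → A → ℝ
  /-- the aggregated bonus `B_h^{R,k}` -/
  BR : ℕ → ℕ → S → A → ℝ
  /-- the bonus difference `δ_h^{R,k}` -/
  dR : ℕ → ℕ → S → A → ℝ
  /-- `bR k h` : the exploration bonus `b_h^R` computed at step `h` of episode `k` -/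
  bR : ℕ → ℕ → ℝ
  /-- `kvis n h s a = k_h^n(s,a)` : the episode of the `n`-th visit of `(s,a)` at step `h` -/
  kvis : ℕ → ℕ → S → A → ℕ
  greedy : ∀ k h s a, Q k h s a ≤ Q k h s (pol k h s)
  act_eq : ∀ k h, ac k h = pol k h (st k h)
  N_init : ∀ h s a, N 0 h s a = 0
  N_upd : ∀ k ∈ Icc 1 K, ∀ h ∈ Icc 1 M.H, ∀ s a,
    N k h s a = N (k - 1) h s a + (if s = st k h ∧ a = ac k h then 1 else 0)
  Q_init : ∀ h ∈ Icc 1 M.H, ∀ s a, Q 1 h s a = M.H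
  QUCB_init : ∀ h ∈ Icc 1 M.H, ∀ s a, QUCB 1 h s a = M.H
  QR_init : ∀ h ∈ Icc 1 M.H, ∀ s a, QR 1 h s a = M.H
  QLCB_init : ∀ h ∈ Icc 1 M.H, ∀ s a, QLCB 1 h s a = 0
  V_init : ∀ h ∈ Icc 1 M.H, ∀ s, V 1 h s = M.H
  VR_init : ∀ h ∈ Icc 1 M.H, ∀ s, VR 1 h s = M.H
  VLCB_init : ∀ h ∈ Icc 1 M.H, ∀ s, VLCB 1 h s = 0
  uref_init : ∀ h s, uref 1 h s
  mom_init : ∀ h s a, muRef 1 h s a = 0 ∧ sigRef 1 h s a = 0 ∧ muAdv 1 h s a = 0 ∧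
    sigAdv 1 h s a = 0 ∧ BR 1 h s a = 0 ∧ dR 1 h s a = 0
  V_terminal : ∀ k s, V k (M.H + 1) s = 0 ∧ VR k (M.H + 1) s = 0 ∧ VLCB k (M.H + 1) s = 0
  QUCB_upd : ∀ k ∈ Icc 1 K, ∀ h ∈ Icc 1 M.H, ∀ s a,
    QUCB (k + 1) h s a =
      if s = st k h ∧ a = ac k h then
        (1 - lr M.H (N k h s a)) * QUCB k h s a
          + lr M.H (N k h s a) *
            (M.r h s a + V k (h + 1) (st k (h + 1))
              + cb * Real.sqrt ((M.H : ℝ) ^ 3 * iota S A K M.H δ / (N k h s a)))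
      else QUCB k h s a
  QLCB_upd : ∀ k ∈ Icc 1 K, ∀ h ∈ Icc 1 M.H, ∀ s a,
    QLCB (k + 1) h s a =
      if s = st k h ∧ a = ac k h then
        (1 - lr M.H (N k h s a)) * QLCB k h s a
          + lr M.H (N k h s a) *
            (M.r h s a + VLCB k (h + 1) (st k (h + 1))
              - cb * Real.sqrt ((M.H : ℝ) ^ 3 * iota S A K M.H δ / (N k h s a)))
      else QLCB k h s a
  muRef_upd : ∀ k ∈ Icc 1 K, ∀ h ∈ Icc 1 M.H, ∀ s a,
    muRef (k + 1) h s a =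
      if s = st k h ∧ a = ac k h then
        (1 - 1 / (N k h s a : ℝ)) * muRef k h s a
          + (1 / (N k h s a : ℝ)) * VR k (h + 1) (st k (h + 1))
      else muRef k h s a
  sigRef_upd : ∀ k ∈ Icc 1 K, ∀ h ∈ Icc 1 M.H, ∀ s a,
    sigRef (k + 1) h s a =
      if s = st k h ∧ a = ac k h then
        (1 - 1 / (N k h s a : ℝ)) * sigRef k h s a
          + (1 / (N k h s a : ℝ)) * (VR k (h + 1) (st k (h + 1))) ^ 2
      else sigRef k h s a
  muAdv_upd : ∀ k ∈ Icc 1 K, ∀ h ∈ Icc 1 M.H, ∀ s a,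
    muAdv (k + 1) h s a =
      if s = st k h ∧ a = ac k h then
        (1 - lr M.H (N k h s a)) * muAdv k h s a
          + lr M.H (N k h s a) * (V k (h + 1) (st k (h + 1)) - VR k (h + 1) (st k (h + 1)))
      else muAdv k h s a
  sigAdv_upd : ∀ k ∈ Icc 1 K, ∀ h ∈ Icc 1 M.H, ∀ s a,
    sigAdv (k + 1) h s a =
      if s = st k h ∧ a = ac k h then
        (1 - lr M.H (N k h s a)) * sigAdv k h s a
          + lr M.H (N k h s a) *
              (V k (h + 1) (st k (h + 1)) - VR k (h + 1) (st k (h + 1))) ^ 2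
      else sigAdv k h s a
  BR_upd : ∀ k ∈ Icc 1 K, ∀ h ∈ Icc 1 M.H, ∀ s a,
    BR (k + 1) h s a =
      if s = st k h ∧ a = ac k h then
        cb * Real.sqrt (iota S A K M.H δ / (N k h s a)) *
          (Real.sqrt (sigRef (k + 1) h s a - (muRef (k + 1) h s a) ^ 2)
            + Real.sqrt (M.H) * Real.sqrt (sigAdv (k + 1) h s a - (muAdv (k + 1) h s a) ^ 2))
      else BR k h s a
  dR_upd : ∀ k ∈ Icc 1 K, ∀ h ∈ Icc 1 M.H, ∀ s a,
    dR (k + 1) h s a =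
      if s = st k h ∧ a = ac k h then BR (k + 1) h s a - BR k h s a else dR k h s a
  bR_def : ∀ k ∈ Icc 1 K, ∀ h ∈ Icc 1 M.H,
    bR k h = BR (k + 1) h (st k h) (ac k h)
      + (1 - lr M.H (N k h (st k h) (ac k h))) * dR (k + 1) h (st k h) (ac k h)
          / lr M.H (N k h (st k h) (ac k h))
      + cb * (M.H : ℝ) ^ 2 * iota S A K M.H δ
          / (N k h (st k h) (ac k h) : ℝ) ^ ((3 : ℝ) / 4)
  QR_upd : ∀ k ∈ Icc 1 K, ∀ h ∈ Icc 1 M.H, ∀ s a,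
    QR (k + 1) h s a =
      if s = st k h ∧ a = ac k h then
        (1 - lr M.H (N k h s a)) * QR k h s a
          + lr M.H (N k h s a) *
            (M.r h s a + V k (h + 1) (st k (h + 1)) - VR k (h + 1) (st k (h + 1))
              + muRef (k + 1) h s a + bR k h)
      else QR k h s a
  Q_upd : ∀ k ∈ Icc 1 K, ∀ h ∈ Icc 1 M.H, ∀ s a,
    Q (k + 1) h s a =
      if s = st k h ∧ a = ac k h then
        min (QR (k + 1) h s a) (min (QUCB (k + 1) h s a) (Q k h s a))
      else Q k h s a
  V_upd : ∀ k ∈ Icc 1 K, ∀ h ∈ Icc 1 M.H, ∀ s,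
    V (k + 1) h s =
      if s = st k h then Finset.univ.sup' Finset.univ_nonempty (fun a => Q (k + 1) h s a)
      else V k h s
  VLCB_upd : ∀ k ∈ Icc 1 K, ∀ h ∈ Icc 1 M.H, ∀ s,
    VLCB (k + 1) h s =
      if s = st k h then
        max (Finset.univ.sup' Finset.univ_nonempty (fun a => QLCB (k + 1) h s a)) (VLCB k h s)
      else VLCB k h s
  VR_upd_pos : ∀ k ∈ Icc 1 K, ∀ h ∈ Icc 1 M.H,
    (1 < V (k + 1) h (st k h) - VLCB (k + 1) h (st k h) ∨ uref k h (st k h)) →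
      VR (k + 1) h (st k h) = V (k + 1) h (st k h)
  VR_upd_neg : ∀ k ∈ Icc 1 K, ∀ h ∈ Icc 1 M.H,
    ¬(1 < V (k + 1) h (st k h) - VLCB (k + 1) h (st k h) ∨ uref k h (st k h)) →
      VR (k + 1) h (st k h) = VR k h (st k h)
  VR_upd_other : ∀ k ∈ Icc 1 K, ∀ h ∈ Icc 1 M.H, ∀ s, s ≠ st k h →
    VR (k + 1) h s = VR k h s
  uref_upd_pos : ∀ k ∈ Icc 1 K, ∀ h ∈ Icc 1 M.H,
    1 < V (k + 1) h (st k h) - VLCB (k + 1) h (st k h) → uref (k + 1) h (st k h)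
  uref_upd_neg : ∀ k ∈ Icc 1 K, ∀ h ∈ Icc 1 M.H,
    ¬(1 < V (k + 1) h (st k h) - VLCB (k + 1) h (st k h)) → ¬uref (k + 1) h (st k h)
  uref_upd_other : ∀ k ∈ Icc 1 K, ∀ h ∈ Icc 1 M.H, ∀ s, s ≠ st k h →
    (uref (k + 1) h s ↔ uref k h s)
  kvis_spec : ∀ h ∈ Icc 1 M.H, ∀ s a n, 1 ≤ n → n ≤ N K h s a →
    kvis n h s a ∈ Icc 1 K ∧ N (kvis n h s a) h s a = n ∧
      st (kvis n h s a) h = s ∧ ac (kvis n h s a) h = a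


/-!
Unrolling the recursion for `Q^LCB` writes it as a weighted average, over the past visits to
`(s, a)`, of `r + V^LCB(s') - bonus`. Subtracting the Bellman optimality equation and using
`V^LCB ≤ V*` at step `h + 1` (backward induction on `h`) bounds `Q^LCB - Q*` by the weighted sum of
the innovations `V*(s') - P V*` minus the current bonus.

The weights depend on the total number of visits, which is not known when an innovation is revealed.
For each fixed value `n` of that number, however, they are predictable and their squares sum to at
most `2 H / n`, so the Azuma–Hoeffding inequality applies; a union bound over `(s, a, h, n)` then
covers the random number of visits.
-/

/-! ### Martingale concentration with predictable weights -/

section Azuma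

variable {Ω : Type*} {m m0 : MeasurableSpace Ω} {μ : Measure Ω} {B : ℝ}

/-- The slope in `x` of an affine majorant of `exp (w x - (w B)² / 2)` on `[-B, B]`; it comes from
the chord of the exponential over `[-w B, w B]`. -/
noncomputable def hoeffdingSlope (B w : ℝ) : ℝ :=
  Real.exp (-(w * B) ^ 2 / 2) * (Real.sinh (w * B) / B)

lemma measurable_hoeffdingSlope (B : ℝ) : Measurable (hoeffdingSlope B) := by
  unfold hoeffdingSlope
  fun_prop

lemma exp_neg_half_sq_mul_cosh_le_one (u : ℝ) : Real.exp (-u ^ 2 / 2) * Real.cosh u ≤ 1 := by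
  calc Real.exp (-u ^ 2 / 2) * Real.cosh u ≤ Real.exp (-u ^ 2 / 2) * Real.exp (u ^ 2 / 2) := by
        gcongr
        exact Real.cosh_le_exp_half_sq u
    _ = 1 := by rw [← Real.exp_add, neg_div, neg_add_cancel, Real.exp_zero]

lemma exp_mul_sub_le_one_add_hoeffdingSlope_mul {x : ℝ} (hx : |x| ≤ B) (w : ℝ) :
    Real.exp (w * x - (w * B) ^ 2 / 2) ≤ 1 + hoeffdingSlope B w * x := by
  have hB : 0 ≤ B := (abs_nonneg x).trans hx
  have hxB : |x / B| ≤ 1 := by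
    rw [abs_div, abs_of_nonneg hB]
    exact div_le_one_of_le₀ hx hB
  have hx_eq : x / B * (w * B) = w * x := by
    rcases hB.eq_or_lt with rfl | hB
    · simp [abs_nonpos_iff.mp hx]
    · field_simp
  have hchord := Real.exp_mul_le_cosh_add_mul_sinh hxB (w * B)
  rw [hx_eq] at hchord
  calc Real.exp (w * x - (w * B) ^ 2 / 2)
      = Real.exp (-(w * B) ^ 2 / 2) * Real.exp (w * x) := by rw [← Real.exp_add]; ring_nf
    _ ≤ Real.exp (-(w * B) ^ 2 / 2) * (Real.cosh (w * B) + x / B * Real.sinh (w * B)) := by gcongr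
    _ = Real.exp (-(w * B) ^ 2 / 2) * Real.cosh (w * B) + hoeffdingSlope B w * x := by
        rw [hoeffdingSlope]; ring
    _ ≤ 1 + hoeffdingSlope B w * x := by
        gcongr
        exact exp_neg_half_sq_mul_cosh_le_one (w * B)

lemma abs_hoeffdingSlope_mul_le_one {x : ℝ} (hx : |x| ≤ B) (w : ℝ) :
    |hoeffdingSlope B w * x| ≤ 1 := by
  have hB : 0 ≤ B := (abs_nonneg x).trans hx
  calc |hoeffdingSlope B w * x|
      = Real.exp (-(w * B) ^ 2 / 2) * |Real.sinh (w * B)| * (|x| / B) := by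
        rw [hoeffdingSlope, abs_mul, abs_mul, abs_div, Real.abs_exp, abs_of_nonneg hB]; ring
    _ ≤ Real.exp (-(w * B) ^ 2 / 2) * |Real.sinh (w * B)| * 1 := by
        gcongr
        exact div_le_one_of_le₀ hx hB
    _ ≤ Real.exp (-(w * B) ^ 2 / 2) * Real.cosh (w * B) := by
        rw [mul_one, Real.abs_sinh, ← Real.cosh_abs]
        gcongr
        exact (Real.sinh_lt_cosh _).le
    _ ≤ 1 := exp_neg_half_sq_mul_cosh_le_one (w * B)

lemma exp_mul_sub_le_two {x : ℝ} (hx : |x| ≤ B) (w : ℝ) :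
    Real.exp (w * x - (w * B) ^ 2 / 2) ≤ 2 := by
  linarith [exp_mul_sub_le_one_add_hoeffdingSlope_mul hx w,
    (le_abs_self _).trans (abs_hoeffdingSlope_mul_le_one hx w)]

/-- The exponential of `∑ j < n, (w j * ξ j - (w j * B) ^ 2 / 2)`, the supermartingale behind the
Azuma–Hoeffding inequality. -/
noncomputable def expProcess (w ξ : ℕ → Ω → ℝ) (B : ℝ) (n : ℕ) (ω : Ω) : ℝ :=
  ∏ j ∈ range n, Real.exp (w j ω * ξ j ω - (w j ω * B) ^ 2 / 2)

lemma expProcess_nonneg (w ξ : ℕ → Ω → ℝ) (B : ℝ) (n : ℕ) (ω : Ω) : 0 ≤ expProcess w ξ B n ω :=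
  prod_nonneg fun _ _ => (Real.exp_pos _).le

lemma expProcess_eq_exp (w ξ : ℕ → Ω → ℝ) (B : ℝ) (n : ℕ) (ω : Ω) :
    expProcess w ξ B n ω =
      Real.exp (∑ j ∈ range n, w j ω * ξ j ω - B ^ 2 / 2 * ∑ j ∈ range n, w j ω ^ 2) := by
  rw [expProcess, ← Real.exp_sum, mul_sum, ← sum_sub_distrib]
  congr 1
  exact sum_congr rfl fun j _ => by ring

/-- The first `n` terms of `ξ` are martingale differences bounded by `B`: `ξ j` is revealed at time
`j + 1` and centred given the information at time `j`. -/
structure IsBoundedMartingaleDiff (μ : Measure Ω) (𝓖 : Filtration ℕ m0) (ξ : ℕ → Ω → ℝ) (B : ℝ)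
    (n : ℕ) : Prop where
  measurable : ∀ j < n, Measurable[𝓖 (j + 1)] (ξ j)
  abs_le : ∀ j < n, ∀ ω, |ξ j ω| ≤ B
  condExp_eq_zero : ∀ j < n, μ[ξ j | 𝓖 j] =ᵐ[μ] 0

lemma measurable_expProcess {𝓖 : Filtration ℕ m0} {w ξ : ℕ → Ω → ℝ} {n : ℕ}
    (hw : ∀ j < n, Measurable[𝓖 j] (w j)) (hξ : ∀ j < n, Measurable[𝓖 (j + 1)] (ξ j)) :
    Measurable[𝓖 n] (expProcess w ξ B n) := by
  refine Finset.measurable_fun_prod _ fun j hj => ?_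
  have hjn : j < n := mem_range.mp hj
  have hwj : Measurable[𝓖 n] (w j) := (hw j hjn).mono (𝓖.mono hjn.le) le_rfl
  have hξj : Measurable[𝓖 n] (ξ j) := (hξ j hjn).mono (𝓖.mono hjn) le_rfl
  fun_prop

variable [IsProbabilityMeasure μ]

lemma condExp_exp_mul_sub_le_one (hm : m ≤ m0) {w ξ : Ω → ℝ} (hw : Measurable[m] w)
    (hξ : Measurable[m0] ξ) (hξB : ∀ ω, |ξ ω| ≤ B) (hξ0 : μ[ξ | m] =ᵐ[μ] 0) :
    μ[fun ω => Real.exp (w ω * ξ ω - (w ω * B) ^ 2 / 2) | m] ≤ᵐ[μ] 1 := by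
  have hw0 : Measurable[m0] w := hw.mono hm le_rfl
  have hslope : Measurable[m] fun ω => hoeffdingSlope B (w ω) :=
    (measurable_hoeffdingSlope B).comp hw
  have hξ_int : Integrable ξ μ := .of_bound hξ.aestronglyMeasurable B (.of_forall hξB)
  have hexp_int : Integrable (fun ω => Real.exp (w ω * ξ ω - (w ω * B) ^ 2 / 2)) μ := by
    refine .of_bound (by fun_prop) 2 (.of_forall fun ω => ?_)
    rw [Real.norm_eq_abs, Real.abs_exp]
    exact exp_mul_sub_le_two (hξB ω) (w ω)
  have hlin_int : Integrable ((fun ω => hoeffdingSlope B (w ω)) * ξ) μ :=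
    .of_bound ((hslope.mono hm le_rfl).mul hξ).aestronglyMeasurable 1
      (.of_forall fun ω => abs_hoeffdingSlope_mul_le_one (hξB ω) (w ω))
  have hmajorant : μ[fun ω => Real.exp (w ω * ξ ω - (w ω * B) ^ 2 / 2) | m] ≤ᵐ[μ]
      μ[(fun _ => (1 : ℝ)) + (fun ω => hoeffdingSlope B (w ω)) * ξ | m] :=
    condExp_mono hexp_int ((integrable_const 1).add hlin_int)
      (.of_forall fun ω => exp_mul_sub_le_one_add_hoeffdingSlope_mul (hξB ω) (w ω))
  filter_upwards [hmajorant, condExp_add (integrable_const (1 : ℝ)) hlin_int m,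
    condExp_mul_of_stronglyMeasurable_left hslope.stronglyMeasurable hlin_int hξ_int, hξ0]
    with ω hle hadd hmul hzero
  simpa [hadd, hmul, hzero, condExp_const hm] using hle

namespace IsBoundedMartingaleDiff

variable {𝓖 : Filtration ℕ m0} {w ξ : ℕ → Ω → ℝ} {n : ℕ}

lemma integrable_expProcess (hξ : IsBoundedMartingaleDiff μ 𝓖 ξ B n)
    (hw : ∀ j < n, Measurable[𝓖 j] (w j)) : Integrable (expProcess w ξ B n) μ := by
  refine .of_bound ((measurable_expProcess hw hξ.measurable).mono (𝓖.le n) le_rfl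
    |>.aestronglyMeasurable) (2 ^ n) (.of_forall fun ω => ?_)
  rw [Real.norm_of_nonneg (expProcess_nonneg w ξ B n ω)]
  calc expProcess w ξ B n ω ≤ ∏ _j ∈ range n, (2 : ℝ) :=
        prod_le_prod (fun _ _ => (Real.exp_pos _).le)
          fun j hj => exp_mul_sub_le_two (hξ.abs_le j (mem_range.mp hj) ω) (w j ω)
    _ = 2 ^ n := by simp

lemma integral_expProcess_le_one (hξ : IsBoundedMartingaleDiff μ 𝓖 ξ B n)
    (hw : ∀ j < n, Measurable[𝓖 j] (w j)) : ∫ ω, expProcess w ξ B n ω ∂μ ≤ 1 := by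
  induction n with
  | zero => simp [expProcess]
  | succ n ih =>
    have hξn : IsBoundedMartingaleDiff μ 𝓖 ξ B n :=
      ⟨fun j hj => hξ.measurable j (by omega), fun j hj => hξ.abs_le j (by omega),
        fun j hj => hξ.condExp_eq_zero j (by omega)⟩
    have hwn : ∀ j < n, Measurable[𝓖 j] (w j) := fun j hj => hw j (by omega)
    set Z := expProcess w ξ B n
    set e : Ω → ℝ := fun ω => Real.exp (w n ω * ξ n ω - (w n ω * B) ^ 2 / 2)
    have hsucc : expProcess w ξ B (n + 1) = Z * e := by
      ext ω
      exact prod_range_succ _ n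
    have hξn_meas : Measurable (ξ n) := (hξ.measurable n n.lt_succ_self).mono (𝓖.le _) le_rfl
    have hwn_meas : Measurable (w n) := (hw n n.lt_succ_self).mono (𝓖.le _) le_rfl
    have he_int : Integrable e μ := by
      refine .of_bound (by fun_prop) 2 (.of_forall fun ω => ?_)
      rw [Real.norm_eq_abs, Real.abs_exp]
      exact exp_mul_sub_le_two (hξ.abs_le n n.lt_succ_self ω) (w n ω)
    have hZe_int : Integrable (Z * e) μ := hsucc ▸ hξ.integrable_expProcess hw
    have hpull : μ[Z * e | 𝓖 n] =ᵐ[μ] Z * μ[e | 𝓖 n] :=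
      condExp_mul_of_stronglyMeasurable_left
        (measurable_expProcess hwn hξn.measurable).stronglyMeasurable hZe_int he_int
    have hle : μ[Z * e | 𝓖 n] ≤ᵐ[μ] Z := by
      filter_upwards [hpull, condExp_exp_mul_sub_le_one (𝓖.le n) (hw n n.lt_succ_self) hξn_meas
        (hξ.abs_le n n.lt_succ_self) (hξ.condExp_eq_zero n n.lt_succ_self)] with ω hpull he
      rw [hpull]
      exact mul_le_of_le_one_right (expProcess_nonneg w ξ B n ω) he
    calc ∫ ω, expProcess w ξ B (n + 1) ω ∂μ = ∫ ω, (μ[Z * e | 𝓖 n]) ω ∂μ := by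
          rw [integral_condExp (𝓖.le n), hsucc]
      _ ≤ ∫ ω, Z ω ∂μ := integral_mono_ae integrable_condExp (hξn.integrable_expProcess hwn) hle
      _ ≤ 1 := ih hξn hwn

theorem measureReal_sum_mul_ge_le (hξ : IsBoundedMartingaleDiff μ 𝓖 ξ B n)
    (hw : ∀ j < n, Measurable[𝓖 j] (w j)) {v : ℝ} (hv : ∀ ω, ∑ j ∈ range n, w j ω ^ 2 ≤ v)
    {ε : ℝ} (hε : 0 ≤ ε) :
    μ.real {ω | ε ≤ ∑ j ∈ range n, w j ω * ξ j ω} ≤ Real.exp (-(ε ^ 2 / (2 * B ^ 2 * v))) := by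
  -- The minimiser of the Chernoff exponent `t ^ 2 * B ^ 2 * v / 2 - t * ε`.
  set t : ℝ := ε / (B ^ 2 * v) with ht
  have hexponent : t * ε - t ^ 2 * (B ^ 2 / 2 * v) = ε ^ 2 / (2 * B ^ 2 * v) := by
    by_cases hBv : B ^ 2 * v = 0
    · simp [ht, hBv, mul_assoc]
    · have hB : B ≠ 0 := by rintro rfl; simp at hBv
      have hv0 : v ≠ 0 := by rintro rfl; simp at hBv
      rw [ht]
      field_simp
      ring
  have htw : ∀ j < n, Measurable[𝓖 j] (fun ω => t * w j ω) := fun j hj => (hw j hj).const_mul t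
  have hlarge : {ω | ε ≤ ∑ j ∈ range n, w j ω * ξ j ω} ⊆
      {ω | Real.exp (ε ^ 2 / (2 * B ^ 2 * v)) ≤ expProcess (fun j ω => t * w j ω) ξ B n ω} := by
    intro ω hω
    have hv0 : 0 ≤ v := (sum_nonneg fun j _ => sq_nonneg (w j ω)).trans (hv ω)
    have ht0 : 0 ≤ t := by positivity
    have hlin := mul_le_mul_of_nonneg_left hω ht0
    have hquad := mul_le_mul_of_nonneg_left (hv ω) (by positivity : 0 ≤ t ^ 2 * (B ^ 2 / 2))
    rw [Set.mem_ofPred_eq, expProcess_eq_exp, Real.exp_le_exp, ← hexponent]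
    simp only [mul_assoc, mul_pow, ← mul_sum] at hlin hquad ⊢
    linarith
  have hmarkov := mul_meas_ge_le_integral_of_nonneg
    (.of_forall (expProcess_nonneg (fun j ω => t * w j ω) ξ B n)) (hξ.integrable_expProcess htw)
    (Real.exp (ε ^ 2 / (2 * B ^ 2 * v)))
  rw [Real.exp_neg, ← one_div, le_div_iff₀' (Real.exp_pos _)]
  exact (mul_le_mul_of_nonneg_left (measureReal_mono hlarge) (Real.exp_pos _).le).trans
    (hmarkov.trans (hξ.integral_expProcess_le_one htw))

end IsBoundedMartingaleDiff

end Azuma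

/-! ### Learning rates -/

lemma lr_nonneg (H n : ℕ) : 0 ≤ lr H n := by
  unfold lr
  positivity

lemma lr_le_one (H : ℕ) {n : ℕ} (hn : 1 ≤ n) : lr H n ≤ 1 := by
  have hn' : (1 : ℝ) ≤ n := by exact_mod_cast hn
  exact div_le_one_of_le₀ (by linarith) (by positivity)

lemma lr_one (H : ℕ) : lr H 1 = 1 := by
  rw [lr, Nat.cast_one]
  exact div_self (by positivity)

lemma one_sub_lr_succ (H n : ℕ) : 1 - lr H (n + 1) = n / (H + n + 1) := by
  unfold lr
  push_cast
  field_simp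
  ring

lemma lrProd_nonneg (H n N : ℕ) : 0 ≤ lrProd H n N := by
  have hprod : 0 ≤ ∏ i ∈ Icc (n + 1) N, (1 - lr H i) :=
    prod_nonneg fun i hi => sub_nonneg.mpr (lr_le_one H (by simp only [mem_Icc] at hi; omega))
  unfold lrProd
  split_ifs
  · rfl
  · exact mul_nonneg zero_le_one hprod
  · exact mul_nonneg (lr_nonneg H n) hprod

lemma lrProd_of_lt (H : ℕ) {n N : ℕ} (h : N < n) : lrProd H n N = 0 := if_pos h

lemma lrProd_self (H : ℕ) {n : ℕ} (hn : 1 ≤ n) : lrProd H n n = lr H n := by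
  simp [lrProd, Nat.one_le_iff_ne_zero.mp hn]

lemma lrProd_succ (H : ℕ) {n N : ℕ} (h : n ≤ N) :
    lrProd H n (N + 1) = (1 - lr H (N + 1)) * lrProd H n N := by
  rw [lrProd, lrProd, if_neg (by omega : ¬N + 1 < n), if_neg h.not_gt, prod_Icc_succ_top (by omega)]
  ring

lemma sum_lrProd_eq_one (H : ℕ) {N : ℕ} (hN : 1 ≤ N) : ∑ n ∈ Icc 1 N, lrProd H n N = 1 := by
  induction N, hN using Nat.le_induction with
  | base => simp [lrProd_self, lr_one]
  | succ N _ ih =>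
    rw [sum_Icc_succ_top (by omega), lrProd_self H (by omega),
      sum_congr rfl fun n hn => lrProd_succ H (mem_Icc.mp hn).2, ← mul_sum, ih]
    ring

lemma sum_lrProd_sq_le {H N : ℕ} (hH : 1 ≤ H) (hN : 1 ≤ N) :
    ∑ n ∈ Icc 1 N, lrProd H n N ^ 2 ≤ 2 * H / N := by
  have hH' : (1 : ℝ) ≤ H := by exact_mod_cast hH
  induction N, hN using Nat.le_induction with
  | base =>
    simp only [Icc_self, sum_singleton, lrProd_self H le_rfl, lr_one, Nat.cast_one]
    linarith
  | succ N hN ih =>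
    have hN' : (1 : ℝ) ≤ N := by exact_mod_cast hN
    have hlr : lr H (N + 1) = (H + 1) / (H + N + 1) := by
      rw [lr, Nat.cast_succ, add_assoc]
    have hpoly : (2 * H * N + (H + 1) ^ 2) * (N + 1 : ℝ) ≤ 2 * H * (H + N + 1) ^ 2 := by
      have : (2 : ℝ) * H * (H + N + 1) ^ 2 - (2 * H * N + (H + 1) ^ 2) * (N + 1)
          = N * (3 * H ^ 2 - 1) + (2 * H - 1) * (H + 1) ^ 2 := by ring
      have h3 : (0 : ℝ) ≤ 3 * H ^ 2 - 1 := by nlinarith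
      have h2 : (0 : ℝ) ≤ 2 * H - 1 := by linarith
      nlinarith [mul_nonneg (zero_le_one.trans hN') h3, mul_nonneg h2 (sq_nonneg (H + 1 : ℝ))]
    calc ∑ n ∈ Icc 1 (N + 1), lrProd H n (N + 1) ^ 2
        = (1 - lr H (N + 1)) ^ 2 * ∑ n ∈ Icc 1 N, lrProd H n N ^ 2 + lr H (N + 1) ^ 2 := by
          rw [sum_Icc_succ_top (by omega), lrProd_self H (by omega), mul_sum]
          congr 1
          exact sum_congr rfl fun n hn => by rw [lrProd_succ H (mem_Icc.mp hn).2, mul_pow]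
      _ ≤ (1 - lr H (N + 1)) ^ 2 * (2 * H / N) + lr H (N + 1) ^ 2 := by gcongr
      _ = (2 * H * N + (H + 1) ^ 2) / (H + N + 1) ^ 2 := by
          rw [one_sub_lr_succ, hlr]
          field_simp
      _ ≤ 2 * H / (N + 1 : ℕ) := by
          rw [div_le_div_iff₀ (by positivity) (by positivity)]
          exact_mod_cast hpoly

/-! ### The MDP and its trajectories -/

namespace MDP

variable {S A : Type} [Fintype S] [Fintype A]

/-- The one-step expectation operator `f ↦ P_{h,s,a} f`. -/
noncomputable def expNext (M : MDP S A) (h : ℕ) (s : S) (a : A) (f : S → ℝ) : ℝ :=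
  ∑ s', M.P h s a s' * f s'

lemma expNext_const (M : MDP S A) (h : ℕ) (s : S) (a : A) (c : ℝ) :
    M.expNext h s a (fun _ => c) = c := by
  rw [expNext, ← sum_mul, M.P_sum_one, one_mul]

lemma expNext_mono (M : MDP S A) (h : ℕ) (s : S) (a : A) : Monotone (M.expNext h s a) :=
  fun _ _ hfg => sum_le_sum fun s' _ => mul_le_mul_of_nonneg_left (hfg s') (M.P_nonneg h s a s')

lemma expNext_nonneg (M : MDP S A) (h : ℕ) (s : S) (a : A) {f : S → ℝ} (hf : ∀ s', 0 ≤ f s') :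
    0 ≤ M.expNext h s a f :=
  (M.expNext_const h s a 0).symm.trans_le (M.expNext_mono h s a hf)

lemma expNext_le (M : MDP S A) (h : ℕ) (s : S) (a : A) {f : S → ℝ} {B : ℝ} (hf : ∀ s', f s' ≤ B) :
    M.expNext h s a f ≤ B :=
  (M.expNext_mono h s a hf).trans_eq (M.expNext_const h s a B)

lemma abs_sub_expNext_le (M : MDP S A) (h : ℕ) (s : S) (a : A) {f : S → ℝ} {B : ℝ}
    (hf : ∀ s', f s' ∈ Set.Icc 0 B) (s' : S) : |f s' - M.expNext h s a f| ≤ B :=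
  abs_sub_le_of_nonneg_of_le (hf s').1 (hf s').2 (M.expNext_nonneg h s a fun x => (hf x).1)
    (M.expNext_le h s a fun x => (hf x).2)

variable [Nonempty A]

lemma QstarAux_nonneg (M : MDP S A) (fuel h : ℕ) (s : S) (a : A) : 0 ≤ M.QstarAux fuel h s a := by
  induction fuel generalizing h s a with
  | zero => rfl
  | succ fuel ih =>
    exact add_nonneg (M.r_nonneg h s a) <| M.expNext_nonneg h s a fun s' =>
      (ih (h + 1) s' (Classical.arbitrary A)).trans (le_sup' _ (mem_univ _))

lemma QstarAux_le (M : MDP S A) (fuel h : ℕ) (s : S) (a : A) : M.QstarAux fuel h s a ≤ fuel := by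
  induction fuel generalizing h s a with
  | zero => simp [QstarAux]
  | succ fuel ih =>
    have hnext : M.expNext h s a
        (fun s' => univ.sup' univ_nonempty fun a' => M.QstarAux fuel (h + 1) s' a') ≤ fuel :=
      M.expNext_le h s a fun s' => sup'_le _ _ fun a' _ => ih (h + 1) s' a'
    exact (add_le_add (M.r_le_one h s a) hnext).trans_eq (by push_cast; ring)

lemma Qstar_nonneg (M : MDP S A) (h : ℕ) (s : S) (a : A) : 0 ≤ M.Qstar h s a :=
  M.QstarAux_nonneg _ h s a

lemma Qstar_le_Vstar (M : MDP S A) (h : ℕ) (s : S) (a : A) : M.Qstar h s a ≤ M.Vstar h s :=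
  le_sup' (M.Qstar h s) (mem_univ a)

lemma Vstar_nonneg (M : MDP S A) (h : ℕ) (s : S) : 0 ≤ M.Vstar h s :=
  (M.Qstar_nonneg h s (Classical.arbitrary A)).trans (M.Qstar_le_Vstar h s _)

lemma Vstar_le (M : MDP S A) {h : ℕ} (hh : 1 ≤ h) (s : S) : M.Vstar h s ≤ M.H :=
  sup'_le _ _ fun a _ => (M.QstarAux_le _ h s a).trans (by exact_mod_cast (by omega))

lemma Qstar_eq_add_expNext_Vstar (M : MDP S A) {h : ℕ} (hh : h ≤ M.H) (s : S) (a : A) :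
    M.Qstar h s a = M.r h s a + M.expNext h s a (M.Vstar (h + 1)) := by
  rw [Qstar, Nat.sub_add_comm hh]
  simp only [expNext, Vstar, Qstar, Nat.add_sub_add_right, QstarAux]

end MDP

/-- The information available at step `h` of successive episodes, with episodes counted from `0`. -/
def stepFiltration {Ω : Type*} {m0 : MeasurableSpace Ω} (𝓕 : Filtration ℕ m0) (H h : ℕ) :
    Filtration ℕ m0 where
  seq j := 𝓕 (j * H + h)
  mono' _ _ hij := 𝓕.mono (Nat.add_le_add_right (Nat.mul_le_mul_right H hij) h)
  le' j := 𝓕.le (j * H + h)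

namespace IsMDPTrajectory

variable {S A : Type} [Fintype S] [Fintype A] [DecidableEq S]
  [MeasurableSpace S] [MeasurableSpace A]
  {Ω : Type} {m0 : MeasurableSpace Ω} {μ : Measure Ω}
  {M : MDP S A} {K : ℕ} {𝓕 : Filtration ℕ m0} {st : ℕ → ℕ → Ω → S} {ac : ℕ → ℕ → Ω → A}

lemma measurable_state (htr : IsMDPTrajectory μ M K 𝓕 st ac) {i j h : ℕ} (hi : i ∈ Icc 1 (j + 1))
    (hj : j < K) (hh : h ∈ Icc 1 M.H) : Measurable[stepFiltration 𝓕 M.H h j] (st i h) := by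
  simp only [mem_Icc] at hi hh
  exact (htr.1 i (mem_Icc.mpr (by omega)) h (mem_Icc.mpr (by omega))).mono
    ((stepFiltration 𝓕 M.H h).mono (by omega : i - 1 ≤ j)) le_rfl

lemma measurable_action (htr : IsMDPTrajectory μ M K 𝓕 st ac) {i j h : ℕ} (hi : i ∈ Icc 1 (j + 1))
    (hj : j < K) (hh : h ∈ Icc 1 M.H) : Measurable[stepFiltration 𝓕 M.H h j] (ac i h) := by
  simp only [mem_Icc] at hi
  exact (htr.2.1 i (mem_Icc.mpr (by omega)) h hh).mono
    ((stepFiltration 𝓕 M.H h).mono (by omega : i - 1 ≤ j)) le_rfl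

lemma measurable_nextState (htr : IsMDPTrajectory μ M K 𝓕 st ac) {j h : ℕ} (hj : j < K)
    (hh : h ∈ Icc 1 M.H) :
    Measurable[stepFiltration 𝓕 M.H h (j + 1)] (st (j + 1) (h + 1)) := by
  have := M.H_pos
  simp only [mem_Icc] at hh
  refine (htr.1 (j + 1) (mem_Icc.mpr (by omega)) (h + 1)
    (mem_Icc.mpr (by omega))).mono (𝓕.mono ?_) le_rfl
  rw [Nat.add_sub_cancel, Nat.succ_mul]
  omega

variable [MeasurableSingletonClass S] [IsFiniteMeasure μ]

lemma condExp_comp_nextState (htr : IsMDPTrajectory μ M K 𝓕 st ac) {j h : ℕ} (hj : j < K)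
    (hh : h ∈ Icc 1 M.H) (f : S → ℝ) :
    μ[fun ω => f (st (j + 1) (h + 1) ω) | stepFiltration 𝓕 M.H h j] =ᵐ[μ]
      fun ω => M.expNext h (st (j + 1) h ω) (ac (j + 1) h ω) f := by
  have hst : Measurable (st (j + 1) (h + 1)) :=
    (htr.measurable_nextState hj hh).mono ((stepFiltration 𝓕 M.H h).le _) le_rfl
  set ind : S → Ω → ℝ := fun s' ω => if st (j + 1) (h + 1) ω = s' then 1 else 0
  have hind_int (s' : S) : Integrable (ind s') μ :=
    .of_bound (Measurable.of_discrete.comp hst : Measurable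
      ((fun s => if s = s' then (1 : ℝ) else 0) ∘ st (j + 1) (h + 1))).aestronglyMeasurable 1
      (.of_forall fun ω => by simp only [ind]; split_ifs <;> simp)
  have hdecomp : (fun ω => f (st (j + 1) (h + 1) ω)) = ∑ s', f s' • ind s' := by
    ext ω
    simp [ind]
  have hind (s' : S) : μ[f s' • ind s' | stepFiltration 𝓕 M.H h j] =ᵐ[μ]
      fun ω => f s' * M.P h (st (j + 1) h ω) (ac (j + 1) h ω) s' := by
    filter_upwards [condExp_smul (f s') (ind s') (stepFiltration 𝓕 M.H h j),
      htr.2.2 (j + 1) (mem_Icc.mpr (by omega)) h hh s'] with ω hsmul hP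
    rw [hsmul, Pi.smul_apply, smul_eq_mul]
    congr 1
  rw [hdecomp]
  filter_upwards [condExp_finsetSum (s := univ) (fun s' _ => (hind_int s').smul (f s'))
    (stepFiltration 𝓕 M.H h j), ae_all_iff.mpr hind] with ω hsum hind
  rw [hsum, Finset.sum_apply, MDP.expNext]
  exact sum_congr rfl fun s' _ => by rw [hind s', mul_comm]

lemma isBoundedMartingaleDiff [MeasurableSingletonClass A]
    (htr : IsMDPTrajectory μ M K 𝓕 st ac) {h : ℕ} (hh : h ∈ Icc 1 M.H)
    {f : S → ℝ} {B : ℝ} (hf : ∀ s, f s ∈ Set.Icc 0 B) :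
    IsBoundedMartingaleDiff μ (stepFiltration 𝓕 M.H h)
      (fun j ω => f (st (j + 1) (h + 1) ω)
        - M.expNext h (st (j + 1) h ω) (ac (j + 1) h ω) f) B K := by
  have hmean {j : ℕ} (hj : j < K) : Measurable[stepFiltration 𝓕 M.H h j]
      fun ω => M.expNext h (st (j + 1) h ω) (ac (j + 1) h ω) f :=
    (Measurable.of_discrete (f := fun x : S × A => M.expNext h x.1 x.2 f)).comp
      ((htr.measurable_state (by simp) hj hh).prodMk (htr.measurable_action (by simp) hj hh))
  have hnext {j : ℕ} (hj : j < K) : Measurable[stepFiltration 𝓕 M.H h (j + 1)]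
      fun ω => f (st (j + 1) (h + 1) ω) :=
    Measurable.of_discrete.comp (htr.measurable_nextState hj hh)
  refine ⟨fun j hj => (hnext hj).sub ((hmean hj).mono ((stepFiltration 𝓕 M.H h).mono j.le_succ)
      le_rfl), fun j _ ω => M.abs_sub_expNext_le _ _ _ hf _, fun j hj => ?_⟩
  have hle := (stepFiltration 𝓕 M.H h).le
  have hnext_int : Integrable (fun ω => f (st (j + 1) (h + 1) ω)) μ :=
    .of_bound ((hnext hj).mono (hle _) le_rfl).aestronglyMeasurable B
      (.of_forall fun ω => by rw [Real.norm_of_nonneg (hf _).1]; exact (hf _).2)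
  have hmean_int : Integrable (fun ω => M.expNext h (st (j + 1) h ω) (ac (j + 1) h ω) f) μ :=
    .of_bound ((hmean hj).mono (hle _) le_rfl).aestronglyMeasurable B
      (.of_forall fun ω => by
        rw [Real.norm_of_nonneg (M.expNext_nonneg _ _ _ fun s => (hf s).1)]
        exact M.expNext_le _ _ _ fun s => (hf s).2)
  filter_upwards [condExp_sub hnext_int hmean_int (stepFiltration 𝓕 M.H h j),
    htr.condExp_comp_nextState hj hh f] with ω hsub hcomp
  rw [condExp_of_stronglyMeasurable (hle j) (hmean hj).stronglyMeasurable hmean_int] at hsub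
  exact hsub.trans (sub_eq_zero.mpr hcomp)

end IsMDPTrajectory

/-! ### Unrolling the pessimistic Q-learning recursion -/

/-- The exploration bonus `c_b √(H³ ι / n)` of the `n`-th visit. -/
noncomputable def hoeffdingBonus (cb ι : ℝ) (H n : ℕ) : ℝ := cb * √((H : ℝ) ^ 3 * ι / n)

lemma hoeffdingBonus_nonneg {cb : ℝ} (hcb : 0 ≤ cb) (ι : ℝ) (H n : ℕ) :
    0 ≤ hoeffdingBonus cb ι H n :=
  mul_nonneg hcb (Real.sqrt_nonneg _)

lemma hoeffdingBonus_anti {cb ι : ℝ} (hcb : 0 ≤ cb) (hι : 0 ≤ ι) (H : ℕ) {m n : ℕ} (hm : 1 ≤ m)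
    (hmn : m ≤ n) : hoeffdingBonus cb ι H n ≤ hoeffdingBonus cb ι H m := by
  have : (0 : ℝ) < m := by exact_mod_cast hm
  unfold hoeffdingBonus
  gcongr

namespace QLAlg

variable {S A : Type} [Fintype S] [Fintype A] [Nonempty S] [Nonempty A]
  [DecidableEq S] [DecidableEq A] {M : MDP S A} {K : ℕ} {cb δ : ℝ} (alg : QLAlg M K cb δ)

/-- `(s, a)` is the state-action pair met at step `h` of episode `k`. -/
abbrev Visits (h : ℕ) (s : S) (a : A) (k : ℕ) : Prop := s = alg.st k h ∧ a = alg.ac k h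

/-- The weight `η_{N_k}^n` carried by episode `k` in the estimate at `(s, a)` after `n` visits; it
is `0` unless `(s, a)` is visited in episode `k`. -/
noncomputable def visitWeight (h : ℕ) (s : S) (a : A) (n k : ℕ) : ℝ :=
  if alg.Visits h s a k then lrProd M.H (alg.N k h s a) n else 0

/-- The innovation `V*(s_{h+1}^k) - P_{h, s_h^k, a_h^k} V*` revealed by the transition out of step
`h` of episode `k`. -/
noncomputable def innovation (h k : ℕ) : ℝ :=
  M.Vstar (h + 1) (alg.st k (h + 1)) - M.expNext h (alg.st k h) (alg.ac k h) (M.Vstar (h + 1))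

/-- The event on which, at every state-action pair and for every visit count `n`, the weighted
innovations are dominated by the bonus. -/
def InnovationsConcentrate : Prop :=
  ∀ s a, ∀ h ∈ Icc 1 M.H, ∀ n ∈ Icc 1 K,
    ∑ j ∈ Icc 1 K, alg.visitWeight h s a n j * alg.innovation h j
      ≤ hoeffdingBonus cb (iota S A K M.H δ) M.H n

lemma visitWeight_nonneg (h : ℕ) (s : S) (a : A) (n k : ℕ) : 0 ≤ alg.visitWeight h s a n k := by
  unfold visitWeight
  split_ifs
  · exact lrProd_nonneg ..
  · rfl

section Step

variable {h : ℕ} (hh : h ∈ Icc 1 M.H) (s : S) (a : A)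

include hh

lemma N_succ {k : ℕ} (hk : k < K) :
    alg.N (k + 1) h s a = alg.N k h s a + if alg.Visits h s a (k + 1) then 1 else 0 :=
  alg.N_upd (k + 1) (mem_Icc.mpr (by omega)) h hh s a

lemma N_mono {j k : ℕ} (hjk : j ≤ k) (hk : k ≤ K) : alg.N j h s a ≤ alg.N k h s a := by
  induction k, hjk using Nat.le_induction with
  | base => rfl
  | succ k _ ih =>
    rw [alg.N_succ hh s a hk]
    exact (ih (by omega)).trans (Nat.le_add_right _ _)

lemma N_le {k : ℕ} (hk : k ≤ K) : alg.N k h s a ≤ k := by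
  induction k with
  | zero => exact (alg.N_init h s a).le
  | succ k ih =>
    rw [alg.N_succ hh s a hk]
    exact add_le_add (ih (by omega)) (by split_ifs <;> simp)

lemma N_lt_of_visits {j k : ℕ} (hjk : j < k) (hk : k ≤ K) {s : S} {a : A}
    (hv : alg.Visits h s a k) : alg.N j h s a < alg.N k h s a := by
  obtain ⟨k, rfl⟩ : ∃ i, k = i + 1 := ⟨k - 1, by omega⟩
  rw [alg.N_succ hh s a hk, if_pos hv, Nat.lt_succ_iff]
  exact alg.N_mono hh s a (by omega) (by omega)

lemma one_le_N_of_visits {k : ℕ} (hk : k ∈ Icc 1 K) {s : S} {a : A} (hv : alg.Visits h s a k) :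
    1 ≤ alg.N k h s a := by
  rw [mem_Icc] at hk
  exact Nat.one_le_of_lt (alg.N_lt_of_visits hh hk.1 hk.2 hv)

lemma sum_visits {R : Type*} [AddCommMonoid R] (f : ℕ → R) {k : ℕ} (hk : k ≤ K) :
    ∑ j ∈ Icc 1 k, (if alg.Visits h s a j then f (alg.N j h s a) else 0)
      = ∑ m ∈ Icc 1 (alg.N k h s a), f m := by
  induction k with
  | zero => simp [alg.N_init]
  | succ k ih =>
    have hN := alg.N_succ hh s a hk
    rw [sum_Icc_succ_top (by omega), ih (by omega)]
    split_ifs at hN ⊢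
    · rw [hN, sum_Icc_succ_top (by omega)]
    · rw [hN, add_zero, add_zero]

lemma sum_visitWeight {k : ℕ} (hk : k ≤ K) (hN : 1 ≤ alg.N k h s a) :
    ∑ j ∈ Icc 1 k, alg.visitWeight h s a (alg.N k h s a) j = 1 :=
  (alg.sum_visits hh s a (lrProd M.H · (alg.N k h s a)) hk).trans (sum_lrProd_eq_one M.H hN)

lemma sum_visitWeight_sq_le {n : ℕ} (hn : 1 ≤ n) :
    ∑ j ∈ Icc 1 K, alg.visitWeight h s a n j ^ 2 ≤ 2 * M.H / n := by
  calc ∑ j ∈ Icc 1 K, alg.visitWeight h s a n j ^ 2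
      = ∑ m ∈ Icc 1 (alg.N K h s a), lrProd M.H m n ^ 2 := by
        rw [← alg.sum_visits hh s a (lrProd M.H · n ^ 2) le_rfl]
        exact sum_congr rfl fun j _ => by rw [visitWeight]; split_ifs <;> simp
    _ ≤ ∑ m ∈ Icc 1 n, lrProd M.H m n ^ 2 := by
        rw [← sum_filter_of_ne (p := (· ≤ n)) fun m _ hm => by
          contrapose! hm; rw [lrProd_of_lt M.H hm, zero_pow two_ne_zero]]
        refine sum_le_sum_of_subset_of_nonneg (fun m hm => ?_) fun _ _ _ => sq_nonneg _
        simp only [mem_filter, mem_Icc] at hm ⊢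
        exact ⟨hm.1.1, hm.2⟩
    _ ≤ 2 * M.H / n := sum_lrProd_sq_le M.H_pos hn

lemma visitWeight_N_of_lt {j k : ℕ} (hkj : k < j) (hj : j ≤ K) :
    alg.visitWeight h s a (alg.N k h s a) j = 0 := by
  unfold visitWeight
  split_ifs with hv
  · exact lrProd_of_lt M.H (alg.N_lt_of_visits hh hkj hj hv)
  · rfl

lemma sum_visitWeight_mul_eq (F : ℕ → ℝ) {k : ℕ} (hk : k ≤ K) :
    ∑ j ∈ Icc 1 k, alg.visitWeight h s a (alg.N k h s a) j * F j
      = ∑ j ∈ Icc 1 K, alg.visitWeight h s a (alg.N k h s a) j * F j := by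
  refine sum_subset (Icc_subset_Icc_right hk) fun j hj hjk => ?_
  simp only [mem_Icc] at hj hjk
  rw [alg.visitWeight_N_of_lt hh s a (by omega) hj.2, zero_mul]

lemma sum_visitWeight_mul_succ (F : ℕ → ℝ) {k : ℕ} (hk : k < K) :
    ∑ j ∈ Icc 1 (k + 1), alg.visitWeight h s a (alg.N (k + 1) h s a) j * F j =
      if alg.Visits h s a (k + 1) then
        (1 - lr M.H (alg.N (k + 1) h s a)) *
            ∑ j ∈ Icc 1 k, alg.visitWeight h s a (alg.N k h s a) j * F j
          + lr M.H (alg.N (k + 1) h s a) * F (k + 1)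
      else ∑ j ∈ Icc 1 k, alg.visitWeight h s a (alg.N k h s a) j * F j := by
  have hN := alg.N_succ hh s a hk
  rw [sum_Icc_succ_top (by omega)]
  split_ifs at hN ⊢ with hv
  · have hlast : alg.visitWeight h s a (alg.N (k + 1) h s a) (k + 1)
        = lr M.H (alg.N (k + 1) h s a) := by
      rw [visitWeight, if_pos hv, lrProd_self M.H (by omega)]
    have hold (j : ℕ) (hj : j ∈ Icc 1 k) : alg.visitWeight h s a (alg.N (k + 1) h s a) j
        = (1 - lr M.H (alg.N (k + 1) h s a)) * alg.visitWeight h s a (alg.N k h s a) j := by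
      rw [hN, visitWeight, visitWeight,
        lrProd_succ M.H (alg.N_mono hh s a (mem_Icc.mp hj).2 hk.le), mul_ite, mul_zero]
    rw [hlast, mul_sum]
    congr 1
    exact sum_congr rfl fun j hj => by rw [hold j hj, mul_assoc]
  · rw [hN, add_zero, visitWeight, if_neg hv, zero_mul, add_zero]

theorem QLCB_succ_eq_sum {k : ℕ} (hk : k ≤ K) :
    alg.QLCB (k + 1) h s a = ∑ j ∈ Icc 1 k, alg.visitWeight h s a (alg.N k h s a) j *
      (M.r h s a + alg.VLCB j (h + 1) (alg.st j (h + 1))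
        - hoeffdingBonus cb (iota S A K M.H δ) M.H (alg.N j h s a)) := by
  induction k with
  | zero => simp [alg.QLCB_init h hh s a]
  | succ k ih =>
    rw [alg.sum_visitWeight_mul_succ hh s a _ hk, ← ih (by omega)]
    exact alg.QLCB_upd (k + 1) (mem_Icc.mpr (by omega)) h hh s a

lemma QLCB_succ_eq_zero {k : ℕ} (hk : k ≤ K) (hN : alg.N k h s a = 0) :
    alg.QLCB (k + 1) h s a = 0 := by
  rw [alg.QLCB_succ_eq_sum hh s a hk]
  refine sum_eq_zero fun j hj => ?_
  obtain ⟨hj1, hjk⟩ := mem_Icc.mp hj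
  rw [hN, ← alg.N_init h s a, alg.visitWeight_N_of_lt hh s a hj1 (hjk.trans hk), zero_mul]

lemma visitWeight_mul_target_le (hcb : 0 ≤ cb) (hι : 0 ≤ iota S A K M.H δ) {j k : ℕ}
    (hj : j ∈ Icc 1 k) (hk : k ≤ K) (hV : ∀ s', alg.VLCB j (h + 1) s' ≤ M.Vstar (h + 1) s')
    (n : ℕ) :
    alg.visitWeight h s a n j * (M.r h s a + alg.VLCB j (h + 1) (alg.st j (h + 1))
        - hoeffdingBonus cb (iota S A K M.H δ) M.H (alg.N j h s a))
      ≤ alg.visitWeight h s a n j * (M.Qstar h s a + alg.innovation h j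
        - hoeffdingBonus cb (iota S A K M.H δ) M.H (alg.N k h s a)) := by
  by_cases hv : alg.Visits h s a j
  · have hbonus := hoeffdingBonus_anti hcb hι M.H
      (alg.one_le_N_of_visits hh (Icc_subset_Icc_right hk hj) hv)
      (alg.N_mono hh s a (mem_Icc.mp hj).2 hk)
    have hnext := hV (alg.st j (h + 1))
    refine mul_le_mul_of_nonneg_left ?_ (alg.visitWeight_nonneg ..)
    rw [innovation, ← hv.1, ← hv.2, M.Qstar_eq_add_expNext_Vstar (mem_Icc.mp hh).2]
    linarith
  · simp only [visitWeight, if_neg hv, zero_mul, le_refl]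

lemma InnovationsConcentrate.QLCB_succ_le_Qstar {alg : QLAlg M K cb δ}
    (hconc : alg.InnovationsConcentrate) (hcb : 0 ≤ cb) (hι : 0 ≤ iota S A K M.H δ) {k : ℕ}
    (hk : k ≤ K) (hV : ∀ j ∈ Icc 1 k, ∀ s', alg.VLCB j (h + 1) s' ≤ M.Vstar (h + 1) s') :
    alg.QLCB (k + 1) h s a ≤ M.Qstar h s a := by
  rcases Nat.eq_zero_or_pos (alg.N k h s a) with hn | hn
  · exact (alg.QLCB_succ_eq_zero hh s a hk hn).trans_le (M.Qstar_nonneg h s a)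
  set n := alg.N k h s a
  set b := hoeffdingBonus cb (iota S A K M.H δ) M.H
  calc alg.QLCB (k + 1) h s a
      = ∑ j ∈ Icc 1 k, alg.visitWeight h s a n j *
        (M.r h s a + alg.VLCB j (h + 1) (alg.st j (h + 1)) - b (alg.N j h s a)) :=
        alg.QLCB_succ_eq_sum hh s a hk
    _ ≤ ∑ j ∈ Icc 1 k, alg.visitWeight h s a n j *
        (M.Qstar h s a + alg.innovation h j - b n) :=
        sum_le_sum fun j hj => alg.visitWeight_mul_target_le hh s a hcb hι hj hk (hV j hj) n
    _ = (∑ j ∈ Icc 1 k, alg.visitWeight h s a n j) * (M.Qstar h s a - b n)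
        + ∑ j ∈ Icc 1 k, alg.visitWeight h s a n j * alg.innovation h j := by
        rw [sum_mul, ← sum_add_distrib]
        exact sum_congr rfl fun j _ => by ring
    _ = M.Qstar h s a - b n + ∑ j ∈ Icc 1 K, alg.visitWeight h s a n j * alg.innovation h j := by
        rw [alg.sum_visitWeight hh s a hk hn, one_mul,
          alg.sum_visitWeight_mul_eq hh s a (alg.innovation h) hk]
    _ ≤ M.Qstar h s a - b n + b n := by
        gcongr
        exact hconc s a h hh n (mem_Icc.mpr ⟨hn, (alg.N_le hh s a hk).trans hk⟩)
    _ = M.Qstar h s a := sub_add_cancel _ _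

lemma VLCB_le_Vstar_of_QLCB_le_Qstar
    (hQ : ∀ k ∈ Icc 1 K, ∀ s a, alg.QLCB k h s a ≤ M.Qstar h s a) {k : ℕ} (hk : k ∈ Icc 1 K) :
    alg.VLCB k h s ≤ M.Vstar h s := by
  obtain ⟨hk1, hkK⟩ := mem_Icc.mp hk
  clear hk
  induction k, hk1 using Nat.le_induction with
  | base => exact (alg.VLCB_init h hh s).trans_le (M.Vstar_nonneg h s)
  | succ k hk1 ih =>
    rw [alg.VLCB_upd k (mem_Icc.mpr (by omega)) h hh s]
    split_ifs
    · refine max_le (sup'_le _ _ fun a _ => ?_) (ih (by omega))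
      exact (hQ (k + 1) (mem_Icc.mpr (by omega)) s a).trans (M.Qstar_le_Vstar h s a)
    · exact ih (by omega)

end Step

theorem InnovationsConcentrate.pessimism {alg : QLAlg M K cb δ} (hconc : alg.InnovationsConcentrate)
    (hcb : 0 ≤ cb) (hι : 0 ≤ iota S A K M.H δ) (s : S) (a : A) {k h : ℕ} (hk : k ∈ Icc 1 K)
    (hh : h ∈ Icc 1 M.H) :
    alg.QLCB k h s a ≤ M.Qstar h s a ∧ alg.VLCB k h s ≤ M.Vstar h s := by
  have hQ_of_V {h : ℕ} (hh : h ∈ Icc 1 M.H)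
      (hV : ∀ k ∈ Icc 1 K, ∀ s, alg.VLCB k (h + 1) s ≤ M.Vstar (h + 1) s) :
      ∀ k ∈ Icc 1 K, ∀ s a, alg.QLCB k h s a ≤ M.Qstar h s a := by
    intro k hk s a
    obtain ⟨hk1, hkK⟩ := mem_Icc.mp hk
    obtain ⟨k, rfl⟩ := Nat.exists_eq_add_of_le' hk1
    exact hconc.QLCB_succ_le_Qstar hh s a hcb hι (by omega)
      fun j hj => hV j (Icc_subset_Icc_right (by omega) hj)
  have hV_all {h : ℕ} (hh1 : 1 ≤ h) (hhH : h ≤ M.H + 1) :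
      ∀ k ∈ Icc 1 K, ∀ s, alg.VLCB k h s ≤ M.Vstar h s := by
    induction hhH using Nat.decreasingInduction with
    | self => exact fun k _ s => (alg.V_terminal k s).2.2.trans_le (M.Vstar_nonneg _ s)
    | of_succ h hhH ih =>
      have hh : h ∈ Icc 1 M.H := mem_Icc.mpr (by omega)
      exact fun k hk s =>
        alg.VLCB_le_Vstar_of_QLCB_le_Qstar hh s (hQ_of_V hh (ih (by omega))) hk
  obtain ⟨hh1, hhH⟩ := mem_Icc.mp hh
  exact ⟨hQ_of_V hh (hV_all (by omega) (by omega)) k hk s a, hV_all hh1 (by omega) k hk s⟩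

end QLAlg

/-! ### Concentration of the innovations -/

section Iota

variable {S A : Type} [Fintype S] [Fintype A] [Nonempty S] [Nonempty A] {K H : ℕ} {δ : ℝ}

lemma one_le_card_mul_card_mul (S A : Type) [Fintype S] [Fintype A] [Nonempty S] [Nonempty A]
    (hK : 1 ≤ K) (hH : 1 ≤ H) : (1 : ℝ) ≤ Fintype.card S * Fintype.card A * (K * H) := by
  exact_mod_cast Nat.one_le_iff_ne_zero.mpr
    (by simp [Fintype.card_ne_zero, Nat.one_le_iff_ne_zero.mp hK, Nat.one_le_iff_ne_zero.mp hH])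

lemma iota_nonneg (hK : 1 ≤ K) (hH : 1 ≤ H) (hδ0 : 0 < δ) (hδ1 : δ ≤ 1) : 0 ≤ iota S A K H δ :=
  Real.log_nonneg <| (one_le_div hδ0).mpr <| hδ1.trans <| one_le_card_mul_card_mul S A hK hH

lemma card_mul_exp_neg_iota (hK : 1 ≤ K) (hH : 1 ≤ H) (hδ : 0 < δ) :
    (Fintype.card S * Fintype.card A * (K * H) : ℝ) * Real.exp (-iota S A K H δ) = δ := by
  have hcard := zero_lt_one.trans_le (one_le_card_mul_card_mul S A hK hH)
  rw [Real.exp_neg, iota, Real.exp_log (div_pos hcard hδ), inv_div, mul_div_cancel₀ _ hcard.ne']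

end Iota

namespace QLAlg

variable {S A : Type} [Fintype S] [Fintype A] [Nonempty S] [Nonempty A]
  [DecidableEq S] [DecidableEq A]
  [MeasurableSpace S] [MeasurableSingletonClass S]
  [MeasurableSpace A] [MeasurableSingletonClass A]
  {M : MDP S A} {K : ℕ} {cb δ : ℝ} {Ω : Type} {alg : Ω → QLAlg M K cb δ} {h k : ℕ}

lemma measurableSet_visits {_ : MeasurableSpace Ω} (hst : Measurable fun ω => (alg ω).st k h)
    (hac : Measurable fun ω => (alg ω).ac k h) (s : S) (a : A) :
    MeasurableSet {ω | (alg ω).Visits h s a k} :=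
  (measurableSet_eq_fun measurable_const hst).inter (measurableSet_eq_fun measurable_const hac)

lemma measurable_N {_ : MeasurableSpace Ω} (hh : h ∈ Icc 1 M.H) (hk : k ≤ K)
    (hst : ∀ j ∈ Icc 1 k, Measurable fun ω => (alg ω).st j h)
    (hac : ∀ j ∈ Icc 1 k, Measurable fun ω => (alg ω).ac j h) (s : S) (a : A) :
    Measurable fun ω => (alg ω).N k h s a := by
  have hN_eq (ω : Ω) : (alg ω).N k h s a
      = ∑ j ∈ Icc 1 k, if (alg ω).Visits h s a j then 1 else 0 := by
    rw [(alg ω).sum_visits hh s a (fun _ => 1) hk, sum_const, Nat.card_Icc, smul_eq_mul, mul_one,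
      Nat.add_sub_cancel]
  simp only [hN_eq]
  exact Finset.measurable_fun_sum _ fun j hj =>
    Measurable.ite (measurableSet_visits (hst j hj) (hac j hj) s a) measurable_const
      measurable_const

lemma measurable_visitWeight {_ : MeasurableSpace Ω} (hh : h ∈ Icc 1 M.H) (hk : k ∈ Icc 1 K)
    (hst : ∀ j ∈ Icc 1 k, Measurable fun ω => (alg ω).st j h)
    (hac : ∀ j ∈ Icc 1 k, Measurable fun ω => (alg ω).ac j h) (s : S) (a : A) (n : ℕ) :
    Measurable fun ω => (alg ω).visitWeight h s a n k := by
  obtain ⟨hk1, hkK⟩ := mem_Icc.mp hk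
  have hkk : k ∈ Icc 1 k := right_mem_Icc.mpr hk1
  exact Measurable.ite (measurableSet_visits (hst k hkk) (hac k hkk) s a)
    ((measurable_from_nat (f := (lrProd M.H · n))).comp (measurable_N hh hkK hst hac s a))
    measurable_const

variable {m0 : MeasurableSpace Ω} {μ : Measure Ω} [IsProbabilityMeasure μ] {𝓕 : Filtration ℕ m0}

lemma measureReal_bonus_le_sum_le (htr : IsMDPTrajectory μ M K 𝓕
      (fun k h ω => (alg ω).st k h) (fun k h ω => (alg ω).ac k h))
    (hcb : 2 ≤ cb) (hι : 0 ≤ iota S A K M.H δ) (hh : h ∈ Icc 1 M.H) (s : S) (a : A)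
    {n : ℕ} (hn : 1 ≤ n) :
    μ.real {ω | hoeffdingBonus cb (iota S A K M.H δ) M.H n
        ≤ ∑ j ∈ Icc 1 K, (alg ω).visitWeight h s a n j * (alg ω).innovation h j}
      ≤ Real.exp (-iota S A K M.H δ) := by
  have sum_shift (F : ℕ → ℝ) : ∑ j ∈ Icc 1 K, F j = ∑ j ∈ range K, F (j + 1) := by
    rw [range_eq_Ico, sum_Ico_add' F 0 K 1]
    rfl
  have hdiff := htr.isBoundedMartingaleDiff hh (f := M.Vstar (h + 1)) (B := M.H)
    fun s => ⟨M.Vstar_nonneg _ s, M.Vstar_le (by omega) s⟩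
  have hweight (j : ℕ) (hj : j < K) : Measurable[stepFiltration 𝓕 M.H h j]
      fun ω => (alg ω).visitWeight h s a n (j + 1) :=
    measurable_visitWeight hh (mem_Icc.mpr (by omega))
      (fun i hi => htr.measurable_state hi hj hh) (fun i hi => htr.measurable_action hi hj hh) s a n
  have hsq (ω : Ω) : ∑ j ∈ range K, (alg ω).visitWeight h s a n (j + 1) ^ 2 ≤ 2 * M.H / n :=
    (sum_shift fun j => (alg ω).visitWeight h s a n j ^ 2).symm.trans_le
      ((alg ω).sum_visitWeight_sq_le hh s a hn)
  have hexponent : iota S A K M.H δ ≤ hoeffdingBonus cb (iota S A K M.H δ) M.H n ^ 2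
      / (2 * (M.H : ℝ) ^ 2 * (2 * M.H / n)) := by
    have hH : (0 : ℝ) < M.H := by exact_mod_cast M.H_pos
    have : (0 : ℝ) < n := by exact_mod_cast hn
    have hcb4 : 4 ≤ cb ^ 2 := by nlinarith
    rw [hoeffdingBonus, mul_pow, Real.sq_sqrt (by positivity)]
    calc iota S A K M.H δ = 4 * iota S A K M.H δ / 4 := by ring
      _ ≤ cb ^ 2 * iota S A K M.H δ / 4 := by gcongr
      _ = _ := by field_simp; ring
  simp only [sum_shift]
  exact (hdiff.measureReal_sum_mul_ge_le hweight hsq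
    (hoeffdingBonus_nonneg (zero_le_two.trans hcb) ..)).trans
      (Real.exp_le_exp.mpr (neg_le_neg hexponent))

theorem measureReal_not_innovationsConcentrate_le (htr : IsMDPTrajectory μ M K 𝓕
      (fun k h ω => (alg ω).st k h) (fun k h ω => (alg ω).ac k h))
    (hcb : 2 ≤ cb) (hK : 1 ≤ K) (hδ0 : 0 < δ) (hδ1 : δ ≤ 1) :
    μ.real {ω | ¬(alg ω).InnovationsConcentrate} ≤ δ := by
  have hι : 0 ≤ iota S A K M.H δ := iota_nonneg hK M.H_pos hδ0 hδ1
  let bad (q : (S × A) × ℕ × ℕ) : Set Ω := {ω | hoeffdingBonus cb (iota S A K M.H δ) M.H q.2.2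
    ≤ ∑ j ∈ Icc 1 K, (alg ω).visitWeight q.2.1 q.1.1 q.1.2 q.2.2 j * (alg ω).innovation q.2.1 j}
  let I : Finset ((S × A) × ℕ × ℕ) := univ ×ˢ Icc 1 M.H ×ˢ Icc 1 K
  have hcover : {ω | ¬(alg ω).InnovationsConcentrate} ⊆ ⋃ q ∈ I, bad q := by
    intro ω hω
    contrapose! hω
    simp only [Set.mem_iUnion, not_exists] at hω
    exact not_not.mpr fun s a h hh n hn =>
      (not_le.mp (hω ((s, a), h, n) (by simp [I, mem_Icc.mp hh, mem_Icc.mp hn]))).le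
  calc μ.real {ω | ¬(alg ω).InnovationsConcentrate} ≤ ∑ q ∈ I, μ.real (bad q) :=
        (measureReal_mono hcover (measure_ne_top μ _)).trans (measureReal_biUnion_finset_le I bad)
    _ ≤ ∑ _q ∈ I, Real.exp (-iota S A K M.H δ) := sum_le_sum fun q hq => by
        simp only [I, mem_product] at hq
        exact measureReal_bonus_le_sum_le htr hcb hι hq.2.1 q.1.1 q.1.2 (mem_Icc.mp hq.2.2).1
    _ = (Fintype.card S * Fintype.card A * (K * M.H) : ℝ) * Real.exp (-iota S A K M.H δ) := by
        simp [I, mul_comm (K : ℝ)]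
    _ = δ := card_mul_exp_neg_iota hK M.H_pos hδ0

end QLAlg

/-- **Pessimism of the LCB iterates** (Lemma 3, eq. (33) of the paper).
There is a universal constant `c₀ > 0` such that for any MDP, any `δ ∈ (0,1)` and any
bonus constant `cb ≥ c₀`, with probability at least `1 - δ` over the trajectories,
`Q_h^{LCB,k}(s,a) ≤ Q_h^⋆(s,a)` and `V_h^{LCB,k}(s) ≤ V_h^⋆(s)` simultaneously
for all `(s,a,k,h) ∈ S × A × [K] × [H]`. -/
theorem pessimism_of_QEarlySettledAdvantage :
    ∃ c₀ : ℝ, 0 < c₀ ∧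
      ∀ (S A : Type) [Fintype S] [Fintype A] [Nonempty S] [Nonempty A]
        [DecidableEq S] [DecidableEq A]
        [MeasurableSpace S] [MeasurableSingletonClass S]
        [MeasurableSpace A] [MeasurableSingletonClass A]
        (M : MDP S A) (K : ℕ) (cb δ : ℝ)
        (Ω : Type) (m0 : MeasurableSpace Ω) (μ : Measure Ω)
        (𝓕 : Filtration ℕ m0) (alg : Ω → QLAlg M K cb δ),
        IsProbabilityMeasure μ → 0 < δ → δ < 1 → 1 ≤ K → c₀ ≤ cb →
        IsMDPTrajectory μ M K 𝓕 (fun k h ω => (alg ω).st k h)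
          (fun k h ω => (alg ω).ac k h) →
        1 - δ ≤ (μ {ω | ∀ s a, ∀ k ∈ Icc 1 K, ∀ h ∈ Icc 1 M.H,
            (alg ω).QLCB k h s a ≤ M.Qstar h s a ∧
              (alg ω).VLCB k h s ≤ M.Vstar h s}).toReal := by
  refine ⟨2, two_pos, ?_⟩
  intro S A _ _ _ _ _ _ _ _ _ _ M K cb δ Ω _ μ _ alg _ hδ0 hδ1 hK hcb htr
  have hι : 0 ≤ iota S A K M.H δ := iota_nonneg hK M.H_pos hδ0 hδ1.le
  have hbad := QLAlg.measureReal_not_innovationsConcentrate_le htr hcb hK hδ0 hδ1.le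
  have hone : 1 ≤ μ.real {ω | (alg ω).InnovationsConcentrate}
      + μ.real {ω | ¬(alg ω).InnovationsConcentrate} := by
    simpa [← Set.ofPred_or, em] using measureReal_union_le (μ := μ)
      {ω | (alg ω).InnovationsConcentrate} {ω | ¬(alg ω).InnovationsConcentrate}
  have hgood : 1 - δ ≤ μ.real {ω | (alg ω).InnovationsConcentrate} := by linarith
  refine hgood.trans (measureReal_mono fun ω hconc s a k hk h hh => ?_)
  exact QLAlg.InnovationsConcentrate.pessimism hconc (zero_le_two.trans hcb) hι s a hk hh
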